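/- Let n ≥ 8 be divisible by 4 and let H be a saturated orthogonal array OA(n,n−1,2,2). Let X be the n × ((n−1)(n−2)/2) two-level design whose columns are exactly the interaction columns of all (n−1 choose 2) unordered pairs of distinct columns of H (the columns of H themselves are not included). Then E(s²)(X) = n(n−4)/(n−3), and X is E(s²)-optimal: E(s²)(X) ≤ E(s²)(Y) for every n × ((n−1)(n−2)/2) balanced two-level design Y. -/

import Mathlib

open Finset

/-- The `E(s²)` value of an `n × m` two-level design `X` (columns indexed by `ι`,
`m = card ι`): the average of the squared off-diagonal entries of `XᵀX`. -/
noncomputable def Es2 {n : ℕ} {ι : Type} [Fintype ι] [DecidableEq ι]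
    (X : Fin n → ι → ℚ) : ℚ :=
  (∑ i : ι, ∑ j : ι, if i ≠ j then (∑ r : Fin n, X r i * X r j) ^ 2 else 0) /
    ((Fintype.card ι : ℚ) * ((Fintype.card ι : ℚ) - 1))

theorem aux_expand {n : ℕ} {ι : Type} [Fintype ι] [DecidableEq ι]
    (X : Fin n → ι → ℚ) (h : ∀ i j, X i j = 1 ∨ X i j = -1) :
    (∑ i : ι, ∑ j : ι, if i ≠ j then (∑ r : Fin n, X r i * X r j) ^ 2 else 0)
      = (∑ r : Fin n, ∑ s : Fin n, (∑ i : ι, X r i * X s i) ^ 2)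
        - (Fintype.card ι : ℚ) * (n : ℚ) ^ 2 := by
  have hsq : ∀ i j, X i j * X i j = 1 := by
    intro i j; rcases h i j with h | h <;> rw [h] <;> norm_num
  have h1 : ∀ i j : ι, (if i ≠ j then (∑ r : Fin n, X r i * X r j) ^ 2 else 0)
      = (∑ r : Fin n, X r i * X r j) ^ 2 - (if i = j then (n : ℚ) ^ 2 else 0) := by
    intro i j
    by_cases hij : i = j
    · subst hij; simp [hsq]
    · simp [hij]
  simp_rw [h1, Finset.sum_sub_distrib]
  congr 1
  · simp_rw [sq, Finset.sum_mul_sum]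
    have e1 : ∀ i : ι, ∑ j : ι, ∑ r : Fin n, ∑ s : Fin n, X r i * X r j * (X s i * X s j)
        = ∑ r : Fin n, ∑ s : Fin n, ∑ j : ι, X r i * X r j * (X s i * X s j) := by
      intro i
      rw [Finset.sum_comm]
      refine Finset.sum_congr rfl fun r _ => ?_
      rw [Finset.sum_comm]
    simp_rw [e1]
    rw [Finset.sum_comm]
    refine Finset.sum_congr rfl fun r _ => ?_
    rw [Finset.sum_comm]
    refine Finset.sum_congr rfl fun s _ => ?_
    refine Finset.sum_congr rfl fun i _ => Finset.sum_congr rfl fun j _ => ?_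
    ring
  · simp

theorem aux_rows (n : ℕ) (hn : 8 ≤ n) (H : Fin n → Fin (n - 1) → ℚ)
    (hpm : ∀ i j, H i j = 1 ∨ H i j = -1)
    (hbal : ∀ j, ∑ i : Fin n, H i j = 0)
    (horth : ∀ j k : Fin (n - 1), j ≠ k → ∑ i : Fin n, H i j * H i k = 0)
    (r s : Fin n) (hrs : r ≠ s) : ∑ j, H r j * H s j = -1 := by
  have hsq : ∀ i j, H i j * H i j = 1 := by
    intro i j; rcases hpm i j with h | h <;> rw [h] <;> norm_num
  have hn0 : (n : ℚ) ≠ 0 := by positivity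
  let A : Matrix (Fin n) (Option (Fin (n - 1))) ℚ := fun r o => o.elim 1 (H r)
  have hA0 : ∀ r, A r none = 1 := fun _ => rfl
  have hAs : ∀ r j, A r (some j) = H r j := fun _ _ => rfl
  clear_value A
  have h1 : ((n : ℚ)⁻¹ • A.transpose) * A = 1 := by
    ext a b
    rw [Matrix.smul_mul, Matrix.smul_apply, Matrix.mul_apply]
    rcases a with _ | a <;> rcases b with _ | b
    · simp [Matrix.transpose_apply, hA0, hAs, hn0]
    · simp [Matrix.transpose_apply, hA0, hAs, hbal]
    · simp [Matrix.transpose_apply, hA0, hAs, hbal]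
    · by_cases hab : a = b
      · subst hab; simp [Matrix.transpose_apply, hA0, hAs, hsq, hn0]
      · simp [Matrix.transpose_apply, hA0, hAs, horth a b hab, Matrix.one_apply, hab]
  have h2 : A * ((n : ℚ)⁻¹ • A.transpose) = 1 :=
    (Matrix.mul_eq_one_comm_of_card_eq _ _ _ (by simp; omega)).1 h1
  have h3 := congrFun (congrFun h2 r) s
  rw [Matrix.mul_smul, Matrix.smul_apply, Matrix.mul_apply, Fintype.sum_option,
    Matrix.one_apply_ne hrs] at h3
  simp [Matrix.transpose_apply, hA0, hAs, hn0] at h3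
  linarith

theorem aux_pairs {k : ℕ} (a : Fin k → ℚ) :
    2 * ∑ p : {p : Fin k × Fin k // p.1 < p.2}, a p.1.1 * a p.1.2
      = (∑ j, a j) ^ 2 - ∑ j, a j * a j := by
  have h0 : ∑ p : {p : Fin k × Fin k // p.1 < p.2}, a p.1.1 * a p.1.2
      = ∑ i, ∑ j, if i < j then a i * a j else 0 := by
    rw [← Fintype.sum_prod_type' (f := fun i j => if i < j then a i * a j else 0),
      ← Finset.sum_filter]
    exact (Finset.sum_subtype (p := fun p : Fin k × Fin k => p.1 < p.2) _ (by simp)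
      (fun p => a p.1 * a p.2)).symm
  have h1 : ∑ i, ∑ j, (if i < j then a i * a j else 0)
      = ∑ i, ∑ j, if j < i then a i * a j else 0 := by
    rw [Finset.sum_comm]
    simp_rw [mul_comm]
  have h2 : ∑ j, a j * a j = ∑ i, ∑ j, if i = j then a i * a j else 0 := by simp
  rw [two_mul, h0]
  nth_rewrite 2 [h1]
  rw [h2, sq, Finset.sum_mul_sum, eq_sub_iff_add_eq]
  simp_rw [← Finset.sum_add_distrib]
  refine Finset.sum_congr rfl fun i _ => Finset.sum_congr rfl fun j _ => ?_
  rcases lt_trichotomy i j with h | h | h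
  · simp [h, h.not_gt, h.ne]
  · simp [h]
  · simp [h, h.not_gt, h.ne']

theorem aux_lower (n : ℕ) (hn : 8 ≤ n) {ι : Type} [Fintype ι] [DecidableEq ι]
    (Y : Fin n → ι → ℚ) (h : ∀ i j, Y i j = 1 ∨ Y i j = -1)
    (hb : ∀ j, ∑ i : Fin n, Y i j = 0) :
    (n : ℚ) ^ 2 * (Fintype.card ι : ℚ) ^ 2 / ((n : ℚ) - 1)
      ≤ ∑ r : Fin n, ∑ s : Fin n, (∑ i : ι, Y r i * Y s i) ^ 2 := by
  have hsq : ∀ i j, Y i j * Y i j = 1 := by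
    intro i j; rcases h i j with h | h <;> rw [h] <;> norm_num
  have hnq : (8 : ℚ) ≤ n := by exact_mod_cast hn
  have hn1 : (n : ℚ) - 1 ≠ 0 := by linarith
  set m : ℚ := (Fintype.card ι : ℚ) with hm
  have key : ∀ r : Fin n, (n : ℚ) * m ^ 2 / ((n : ℚ) - 1)
      ≤ ∑ s : Fin n, (∑ i : ι, Y r i * Y s i) ^ 2 := by
    intro r
    have hs : ∑ s : Fin n, ∑ i : ι, Y r i * Y s i = 0 := by
      rw [Finset.sum_comm]
      simp_rw [← Finset.mul_sum, hb]
      simp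
    have hd : ∑ i : ι, Y r i * Y r i = m := by simp [hsq, hm]
    generalize hT : (fun s => ∑ i : ι, Y r i * Y s i) = T
    have hT' : ∀ s, ∑ i : ι, Y r i * Y s i = T s := fun s => congrFun hT s
    simp_rw [hT'] at hs hd ⊢
    rw [← Finset.add_sum_erase _ _ (Finset.mem_univ r)] at hs ⊢
    rw [hd] at hs ⊢
    have cs := sq_sum_le_card_mul_sum_sq (s := Finset.univ.erase r) (f := T)
    have hc : (((Finset.univ.erase r).card : ℕ) : ℚ) = (n : ℚ) - 1 := by
      rw [Finset.card_erase_of_mem (Finset.mem_univ r), Finset.card_univ, Fintype.card_fin,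
        Nat.cast_sub (by omega)]
      simp
    rw [hc, show ∑ i ∈ Finset.univ.erase r, T i = -m by linarith] at cs
    rw [div_le_iff₀ (by linarith)]
    nlinarith
  calc (n : ℚ) ^ 2 * m ^ 2 / ((n : ℚ) - 1) = ∑ _r : Fin n, (n : ℚ) * m ^ 2 / ((n : ℚ) - 1) := by
        simp; ring
    _ ≤ _ := Finset.sum_le_sum fun r _ => key r

theorem Es2_optimal_interactions_only (n : ℕ) (hn : 8 ≤ n) (h4 : 4 ∣ n)
    (H : Fin n → Fin (n - 1) → ℚ)
    (hpm : ∀ i j, H i j = 1 ∨ H i j = -1)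
    (hbal : ∀ j, ∑ i : Fin n, H i j = 0)
    (horth : ∀ j k : Fin (n - 1), j ≠ k → ∑ i : Fin n, H i j * H i k = 0)
    (X : Fin n → {p : Fin (n - 1) × Fin (n - 1) // p.1 < p.2} → ℚ)
    (hX : ∀ r p, X r p = H r p.1.1 * H r p.1.2) :
    Es2 X = (n : ℚ) * ((n : ℚ) - 4) / ((n : ℚ) - 3) ∧
      ∀ Y : Fin n → Fin ((n - 1) * (n - 2) / 2) → ℚ,
        (∀ i j, Y i j = 1 ∨ Y i j = -1) → (∀ j, ∑ i : Fin n, Y i j = 0) →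
          Es2 X ≤ Es2 Y := by
  have hsq : ∀ i j, H i j * H i j = 1 := by
    intro i j; rcases hpm i j with h | h <;> rw [h] <;> norm_num
  have hnq : (8 : ℚ) ≤ n := by exact_mod_cast hn
  have hn1 : (n : ℚ) - 1 ≠ 0 := by linarith
  have hn3 : (n : ℚ) - 3 ≠ 0 := by linarith
  have hc1 : ((n - 1 : ℕ) : ℚ) = (n : ℚ) - 1 := by
    rw [Nat.cast_sub (by omega)]; simp
  have hc2 : ((n - 2 : ℕ) : ℚ) = (n : ℚ) - 2 := by
    rw [Nat.cast_sub (by omega)]; simp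
  have hXpm : ∀ r p, X r p = 1 ∨ X r p = -1 := by
    intro r p
    rw [hX]
    rcases hpm r p.1.1 with h | h <;> rcases hpm r p.1.2 with h' | h' <;> rw [h, h'] <;> norm_num
  have hcard : (Fintype.card {p : Fin (n - 1) × Fin (n - 1) // p.1 < p.2} : ℚ)
      = ((n : ℚ) - 1) * ((n : ℚ) - 2) / 2 := by
    have := aux_pairs (k := n - 1) (fun _ => (1 : ℚ))
    simp only [mul_one, Finset.sum_const, Finset.card_univ, nsmul_eq_mul, Fintype.card_fin,
      hc1] at this
    linarith
  have hcardY : (((n - 1) * (n - 2) / 2 : ℕ) : ℚ) = ((n : ℚ) - 1) * ((n : ℚ) - 2) / 2 := by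
    rw [Nat.cast_div _ (by norm_num)]
    · push_cast [hc1, hc2]; ring
    · exact Dvd.dvd.mul_left (by omega) _
  have hT : ∀ r s : Fin n, ∑ p, X r p * X s p =
      if r = s then ((n : ℚ) - 1) * ((n : ℚ) - 2) / 2 else -((n : ℚ) - 2) / 2 := by
    intro r s
    have e := aux_pairs (fun j => H r j * H s j)
    have e1 : ∑ p, X r p * X s p = ∑ p : {p : Fin (n - 1) × Fin (n - 1) // p.1 < p.2},
        (H r p.1.1 * H s p.1.1) * (H r p.1.2 * H s p.1.2) := by
      refine Finset.sum_congr rfl fun p _ => ?_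
      rw [hX, hX]; ring
    have e2 : ∑ j, (H r j * H s j) * (H r j * H s j) = (n : ℚ) - 1 := by
      have : ∀ j, (H r j * H s j) * (H r j * H s j) = 1 := by
        intro j
        rw [mul_mul_mul_comm, hsq, hsq, one_mul]
      simp [this, hc1]
    rw [e1]
    simp only [e2] at e
    by_cases hrs : r = s
    · subst hrs
      have e3 : ∑ j, H r j * H r j = (n : ℚ) - 1 := by simp [hsq, hc1]
      rw [e3] at e
      rw [if_pos rfl]
      linarith
    · rw [aux_rows n hn H hpm hbal horth r s hrs] at e
      rw [if_neg hrs]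
      linarith
  have hsum : ∑ r : Fin n, ∑ s : Fin n, (∑ p, X r p * X s p) ^ 2
      = (n : ℚ) ^ 2 * (((n : ℚ) - 1) * ((n : ℚ) - 2) / 2) ^ 2 / ((n : ℚ) - 1) := by
    have e : ∀ r s : Fin n, (∑ p, X r p * X s p) ^ 2 = (((n : ℚ) - 2) / 2) ^ 2 +
        if r = s then (((n : ℚ) - 1) * ((n : ℚ) - 2) / 2) ^ 2 - (((n : ℚ) - 2) / 2) ^ 2 else 0 := by
      intro r s
      rw [hT]
      split_ifs <;> ring
    simp_rw [e, Finset.sum_add_distrib]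
    simp
    field_simp
    ring
  have hm1 : 0 < ((n : ℚ) - 1) * ((n : ℚ) - 2) / 2 * (((n : ℚ) - 1) * ((n : ℚ) - 2) / 2 - 1) := by
    have : 1 < ((n : ℚ) - 1) * ((n : ℚ) - 2) / 2 := by nlinarith
    exact mul_pos (by linarith) (by linarith)
  constructor
  · unfold Es2
    rw [aux_expand X hXpm, hsum, hcard, div_eq_div_iff hm1.ne' hn3]
    field_simp
    ring
  · intro Y hY hYb
    unfold Es2
    rw [aux_expand X hXpm, aux_expand Y hY, hsum, hcard, Fintype.card_fin, hcardY]
    have := aux_lower n hn Y hY hYb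
    rw [Fintype.card_fin, hcardY] at this
    exact div_le_div_of_nonneg_right (by linarith) hm1.le
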